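/- Let e1, e2 ∈ E with e1·e2 = 0. Then there are exactly 12 roots e ∈ E with e·e1 = 1 and e·e2 = 1. Moreover, these 12 roots together with e1 and e2 form the 14 roots of an element of C, and this is the unique element of C one of whose seven pairs is {e1,e2} or which contains both e1 and e2 among its roots. -/

import Mathlib

noncomputable section

/-- The standard dot product on ℝ^8. -/
def dot (a b : Fin 8 → ℝ) : ℝ := ∑ i, a i * b i

/-- Membership in the E8 lattice Λ: all coordinates are integers or all lie in ℤ + 1/2,
and the coordinates sum to an even integer. -/
def inLambda (a : Fin 8 → ℝ) : Prop :=
  ((∀ i, ∃ n : ℤ, a i = n) ∨ (∀ i, ∃ n : ℤ, a i = n + 1 / 2)) ∧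
    ∃ n : ℤ, (∑ i, a i) = 2 * n

/-- The E8 root system E: lattice vectors of squared norm 2. -/
def isRoot (a : Fin 8 → ℝ) : Prop := inLambda a ∧ dot a a = 2

/-- The Weyl group W: linear isometries of ℝ^8 mapping the root system E onto itself. -/
def IsWeyl (w : (Fin 8 → ℝ) ≃ₗ[ℝ] (Fin 8 → ℝ)) : Prop :=
  (∀ a b : Fin 8 → ℝ, dot (w a) (w b) = dot a b) ∧
    (⇑w '' {a | isRoot a} = {a | isRoot a})

/-- An element of the set `C`: a family of seven unordered pairs of roots
`{{e₁,f₁},…,{e₇,f₇}}` with `eᵢ·fᵢ = 0` for each `i`, and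
`eᵢ·eⱼ = eᵢ·fⱼ = fᵢ·fⱼ = 1` for all `i ≠ j` (the vertex set of a 7-crosspolytope
facet of the E8 root polytope). -/
def IsCross (P : Set (Set (Fin 8 → ℝ))) : Prop :=
  ∃ e f : Fin 7 → (Fin 8 → ℝ),
    P = Set.range (fun i => ({e i, f i} : Set (Fin 8 → ℝ))) ∧
    (∀ i, isRoot (e i) ∧ isRoot (f i)) ∧
    (∀ i, dot (e i) (f i) = 0) ∧
    (∀ i j, i ≠ j →
      dot (e i) (e j) = 1 ∧ dot (e i) (f j) = 1 ∧ dot (f i) (f j) = 1)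

def gen (vals : List ℤ) : ℕ → ℤ → List (List ℤ)
  | 0, r => if r = 0 then [[]] else []
  | n+1, r => vals.flatMap (fun a => if a * a ≤ r then (gen vals n (r - a * a)).map (a :: ·) else [])

theorem mem_gen (vals : List ℤ) : ∀ (n : ℕ) (r : ℤ) (l : List ℤ),
    l ∈ gen vals n r ↔ l.length = n ∧ (∀ a ∈ l, a ∈ vals) ∧ (l.map fun a => a * a).sum = r := by
  intro n
  induction n with
  | zero =>
    intro r l
    unfold gen
    split_ifs with h
    · subst h; simp only [List.mem_singleton, List.length_eq_zero_iff]
      constructor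
      · rintro rfl; simp
      · exact fun h => h.1
    · simp only [List.not_mem_nil, List.length_eq_zero_iff, false_iff]
      rintro ⟨rfl, -, h2⟩
      exact h (by simpa using h2.symm)
  | succ n ih =>
    intro r l
    unfold gen
    simp only [List.mem_flatMap]
    constructor
    · rintro ⟨a, ha, hl⟩
      split_ifs at hl with h
      · obtain ⟨t, ht, rfl⟩ := List.mem_map.1 hl
        obtain ⟨h1, h2, h3⟩ := (ih _ _).1 ht
        refine ⟨by simp [h1], ?_, by simp [h3]⟩
        intro b hb
        rcases List.mem_cons.1 hb with rfl | hb
        · exact ha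
        · exact h2 b hb
      · simp at hl
    · rintro ⟨h1, h2, h3⟩
      cases l with
      | nil => simp at h1
      | cons a t =>
        have hs : 0 ≤ (t.map fun a => a * a).sum := by
          apply List.sum_nonneg
          intro x hx
          obtain ⟨y, -, rfl⟩ := List.mem_map.1 hx
          exact mul_self_nonneg y
        simp only [List.map_cons, List.sum_cons] at h3
        refine ⟨a, h2 a (by simp), ?_⟩
        rw [if_pos (by linarith)]
        refine List.mem_map.2 ⟨t, (ih _ _).2 ⟨by simpa using h1, fun b hb => h2 b (by simp [hb]), by linarith⟩, rfl⟩

theorem nodup_gen (vals : List ℤ) (hv : vals.Nodup) : ∀ (n : ℕ) (r : ℤ), (gen vals n r).Nodup := by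
  intro n
  induction n with
  | zero => intro r; unfold gen; split_ifs <;> simp
  | succ n ih =>
    intro r
    unfold gen
    rw [List.nodup_flatMap]
    constructor
    · intro a _
      split_ifs
      · exact (ih _).map (List.cons_injective)
      · simp
    · refine hv.imp ?_
      intro a b hab
      simp only [Function.onFun]
      intro l hl hl'
      split_ifs at hl hl' <;> simp at hl hl'
      obtain ⟨t, _, rfl⟩ := hl
      obtain ⟨t', _, h⟩ := hl'
      simp at h
      exact hab h.1.symm

def rootL : List (List ℤ) :=
  (gen [-2, 0, 2] 8 8 ++ gen [-1, 1] 8 8).filter (fun l => l.sum % 4 = 0)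

theorem nodup_rootL : rootL.Nodup := by
  unfold rootL
  apply List.Nodup.filter
  refine List.Nodup.append (nodup_gen _ (by decide) _ _) (nodup_gen _ (by decide) _ _) ?_
  intro l h1 h2
  obtain ⟨a1, a2, -⟩ := (mem_gen _ _ _ _).1 h1
  obtain ⟨-, b2, -⟩ := (mem_gen _ _ _ _).1 h2
  cases l with
  | nil => simp at a1
  | cons a t =>
    have := a2 a (by simp)
    have := b2 a (by simp)
    simp at *
    omega

def vec (l : List ℤ) : Fin 8 → ℤ := fun i => l.getD i 0

theorem vec_ofFn (m : Fin 8 → ℤ) : vec (List.ofFn m) = m := by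
  funext i; fin_cases i <;> rfl

theorem ofFn_vec (l : List ℤ) (h : l.length = 8) : List.ofFn (vec l) = l := by
  apply List.ext_getElem
  · simp [h]
  · intro i h1 h2
    simp only [List.getElem_ofFn, vec, List.getD_eq_getElem?_getD, List.getElem?_eq_getElem h2, Option.getD_some]

def IsD (m : Fin 8 → ℤ) : Prop :=
  ((∀ i, m i % 2 = 0) ∨ (∀ i, m i % 2 = 1)) ∧ (∑ i, m i) % 4 = 0 ∧ ∑ i, m i * m i = 8

theorem mem_rootL (m : Fin 8 → ℤ) : List.ofFn m ∈ rootL ↔ IsD m := by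
  unfold rootL IsD
  simp only [List.mem_filter, List.mem_append, mem_gen, List.length_ofFn, List.mem_ofFn,
    List.map_ofFn, List.sum_ofFn, Function.comp, Set.mem_range, forall_exists_index,
    forall_apply_eq_imp_iff, decide_eq_true_eq, true_and, ]
  have bd : ∑ i, m i * m i = 8 → ∀ i, m i * m i ≤ 8 := by
    intro h i
    rw [← h]
    exact Finset.single_le_sum (f := fun i => m i * m i) (fun j _ => mul_self_nonneg _) (Finset.mem_univ i)
  constructor
  · rintro ⟨⟨h1, h2⟩ | ⟨h1, h2⟩, h3⟩
    · refine ⟨Or.inl fun i => ?_, h3, h2⟩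
      have := h1 i; simp at this; omega
    · refine ⟨Or.inr fun i => ?_, h3, h2⟩
      have := h1 i; simp at this; omega
  · rintro ⟨h1 | h1, h3, h2⟩
    · refine ⟨Or.inl ⟨fun i => ?_, h2⟩, h3⟩
      have a := bd h2 i
      have b := h1 i
      have : m i ≤ 2 := by nlinarith
      have : -2 ≤ m i := by nlinarith
      simp; omega
    · refine ⟨Or.inr ⟨fun i => ?_, h2⟩, h3⟩
      have a := bd h2 i
      have b := h1 i
      have : m i ≤ 2 := by nlinarith
      have : -2 ≤ m i := by nlinarith
      simp; omega

theorem len_rootL (l : List ℤ) (h : l ∈ rootL) : l.length = 8 := by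
  unfold rootL at h
  simp only [List.mem_filter, List.mem_append, mem_gen] at h
  rcases h.1 with h | h <;> exact h.1

def XF : Finset (Fin 8 → ℤ) := (rootL.map vec).toFinset

theorem mem_XF (m : Fin 8 → ℤ) : m ∈ XF ↔ IsD m := by
  rw [← mem_rootL, XF, List.mem_toFinset, List.mem_map]
  constructor
  · rintro ⟨l, hl, rfl⟩
    rwa [ofFn_vec l (len_rootL l hl)]
  · intro h
    exact ⟨_, h, vec_ofFn m⟩

theorem sum_XF (g : (Fin 8 → ℤ) → ℤ) : ∑ x ∈ XF, g x = (rootL.map fun l => g (vec l)).sum := by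
  rw [XF, List.sum_toFinset, List.map_map]
  · rfl
  · refine List.Nodup.map_on ?_ nodup_rootL
    intro a ha b hb hab
    rw [← ofFn_vec a (len_rootL a ha), hab, ofFn_vec b (len_rootL b hb)]

def dl (i j : Fin 8) : ℤ := if i = j then 1 else 0

theorem sort4 (P : Fin 8 → Fin 8 → Fin 8 → Fin 8 → Prop)
    (h12 : ∀ a b c d, P a b c d → P b a c d)
    (h23 : ∀ a b c d, P a b c d → P a c b d)
    (h34 : ∀ a b c d, P a b c d → P a b d c)
    (hs : ∀ a b, a ≤ b → ∀ c, b ≤ c → ∀ d, c ≤ d → P a b c d) : ∀ a b c d, P a b c d := by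
  have s3 : ∀ a b c d, a ≤ b → b ≤ c → P a b c d := by
    intro a b c d hab hbc
    rcases le_total c d with h | h
    · exact hs _ _ hab _ hbc _ h
    apply h34
    rcases le_total b d with h' | h'
    · exact hs _ _ hab _ h' _ h
    apply h23
    rcases le_total a d with h'' | h''
    · exact hs _ _ h'' _ h' _ hbc
    apply h12
    exact hs _ _ h'' _ hab _ hbc
  have s2 : ∀ a b c d, a ≤ b → P a b c d := by
    intro a b c d hab
    rcases le_total b c with h | h
    · exact s3 _ _ _ _ hab h
    apply h23
    rcases le_total a c with h' | h'
    · exact s3 _ _ _ _ h' h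
    apply h12
    exact s3 _ _ _ _ h' hab
  intro a b c d
  rcases le_total a b with h | h
  · exact s2 _ _ _ _ h
  · exact h12 _ _ _ _ (s2 _ _ _ _ h)

theorem dl_comm (i j : Fin 8) : dl i j = dl j i := by simp [dl, eq_comm]

set_option maxRecDepth 100000 in
theorem M4s : ∀ i j : Fin 8, i ≤ j → ∀ k, j ≤ k → ∀ l, k ≤ l →
   (rootL.map fun x => vec x i * vec x j * vec x k * vec x l).sum
     = 192 * (dl i j * dl k l + dl i k * dl j l + dl i l * dl j k) := by
  decide +kernel
set_option maxRecDepth 100000 in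
theorem M2 : ∀ i j : Fin 8, (rootL.map fun x => vec x i * vec x j).sum = 240 * dl i j := by
  decide +kernel

theorem M2F (i j : Fin 8) : ∑ x ∈ XF, x i * x j = 240 * dl i j := by
  rw [sum_XF]; exact M2 i j

theorem M4F (i j k l : Fin 8) : ∑ x ∈ XF, x i * x j * x k * x l
     = 192 * (dl i j * dl k l + dl i k * dl j l + dl i l * dl j k) := by
  refine sort4 (fun i j k l => ∑ x ∈ XF, x i * x j * x k * x l
     = 192 * (dl i j * dl k l + dl i k * dl j l + dl i l * dl j k)) ?_ ?_ ?_ ?_ i j k l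
  · intro a b c d h
    rw [dl_comm b a]
    convert h using 1
    · exact Finset.sum_congr rfl fun x _ => by ring
    · ring
  · intro a b c d h
    rw [dl_comm c b]
    convert h using 1
    · exact Finset.sum_congr rfl fun x _ => by ring
    · ring
  · intro a b c d h
    rw [dl_comm d c]
    convert h using 1
    · exact Finset.sum_congr rfl fun x _ => by ring
    · ring
  · intro a b h1 c h2 d h3
    rw [sum_XF]; exact M4s a b h1 c h2 d h3

def dz (a b : Fin 8 → ℤ) : ℤ := ∑ i, a i * b i

theorem mom2 (w : Fin 8 → ℤ) : ∑ x ∈ XF, dz x w ^ 2 = 240 * dz w w := by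
  have : ∀ x : Fin 8 → ℤ, dz x w ^ 2 = ∑ i, ∑ j, w i * w j * (x i * x j) := by
    intro x
    rw [pow_two, dz, Finset.sum_mul_sum]
    exact Finset.sum_congr rfl fun i _ => Finset.sum_congr rfl fun j _ => by ring
  simp_rw [this]
  rw [Finset.sum_comm]
  simp_rw [Finset.sum_comm (s := XF), ← Finset.mul_sum, M2F, dz, dl]
  simp [Finset.mul_sum]
  exact Finset.sum_congr rfl fun i _ => by ring

theorem mom4 (w : Fin 8 → ℤ) : ∑ x ∈ XF, dz x w ^ 4 = 576 * dz w w ^ 2 := by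
  have : ∀ x : Fin 8 → ℤ, dz x w ^ 4 = ∑ i, ∑ j, ∑ k, ∑ l, w i * w j * w k * w l * (x i * x j * x k * x l) := by
    intro x
    rw [show dz x w ^ 4 = dz x w * (dz x w * (dz x w * dz x w)) by ring]
    simp only [dz, Finset.sum_mul_sum, Finset.mul_sum, Finset.sum_mul]
    refine Finset.sum_congr rfl fun i _ => Finset.sum_congr rfl fun j _ => Finset.sum_congr rfl fun k _ => Finset.sum_congr rfl fun l _ => by ring
  have e : ∀ i j k l : Fin 8, w i * w j * w k * w l * (192 * (dl i j * dl k l + dl i k * dl j l + dl i l * dl j k)) =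
     192 * ((w i * w j * dl i j) * (w k * w l * dl k l)) + 192 * ((w i * w k * dl i k) * (w j * w l * dl j l))
       + 192 * ((w i * w l * dl i l) * (w j * w k * dl j k)) := by intros; ring
  have s1 : ∀ i, ∑ j, w i * w j * dl i j = w i * w i := by intro i; simp [dl]
  simp_rw [this]
  rw [Finset.sum_comm]
  simp_rw [Finset.sum_comm (s := XF), ← Finset.mul_sum, M4F, e, Finset.sum_add_distrib, ← Finset.mul_sum, s1]
  simp only [← Finset.sum_mul, ← Finset.mul_sum, s1]
  simp only [dz]
  ring

theorem IsD.neg {m : Fin 8 → ℤ} (h : IsD m) : IsD (-m) := by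
  obtain ⟨h1, h2, h3⟩ := h
  refine ⟨?_, ?_, by simpa using h3⟩
  · rcases h1 with h1 | h1
    · left; intro i; have := h1 i; simp; omega
    · right; intro i; have := h1 i; simp only [Pi.neg_apply]; omega
  · simp only [Pi.neg_apply, Finset.sum_neg_distrib]; omega

theorem count14 (w : Fin 8 → ℤ) (hw : dz w w = 16) (hd : ∀ x ∈ XF, 4 ∣ dz x w) :
    (XF.filter fun x => dz x w = 8).card = 14 := by
  have key : ∀ x ∈ XF, dz x w ^ 4 - 16 * dz x w ^ 2 =
      3072 * ((if dz x w = 8 then 1 else 0) + (if dz x w = -8 then 1 else 0)) := by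
    intro x hx
    have h1 := Finset.sum_mul_sq_le_sq_mul_sq Finset.univ x w
    have h2 : ∑ i, x i ^ 2 = 8 := by
      rw [← ((mem_XF x).1 hx).2.2]; exact Finset.sum_congr rfl fun i _ => pow_two _
    have h3 : ∑ i, w i ^ 2 = 16 := by
      rw [← hw]; exact Finset.sum_congr rfl fun i _ => pow_two _
    rw [h2, h3] at h1
    change dz x w ^ 2 ≤ _ at h1
    obtain ⟨k, hk⟩ := hd x hx
    rw [hk] at h1 ⊢
    have : k ≤ 2 := by nlinarith
    have : -2 ≤ k := by nlinarith
    interval_cases k <;> norm_num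
  have hs := Finset.sum_congr rfl key
  rw [Finset.sum_sub_distrib, ← Finset.mul_sum, ← Finset.mul_sum, mom4, mom2, hw,
    Finset.sum_add_distrib, Finset.sum_boole, Finset.sum_boole] at hs
  have hneg : (XF.filter fun x => dz x w = -8).card = (XF.filter fun x => dz x w = 8).card := by
    refine Finset.card_bij (fun x _ => -x) ?_ ?_ ?_
    · intro x hx
      rw [Finset.mem_filter, mem_XF] at hx ⊢
      refine ⟨hx.1.neg, ?_⟩
      have := hx.2
      simp [dz] at this ⊢; omega
    · intro a _ b _ h; simpa using h
    · intro x hx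
      rw [Finset.mem_filter, mem_XF] at hx
      refine ⟨-x, ?_, by simp⟩
      rw [Finset.mem_filter, mem_XF]
      refine ⟨hx.1.neg, ?_⟩
      have := hx.2
      simp [dz] at this ⊢; omega
  rw [hneg] at hs
  push_cast at hs
  omega

def hf (m : Fin 8 → ℤ) : Fin 8 → ℝ := fun i => (m i : ℝ) / 2

theorem hf_inj : Function.Injective hf := by
  intro a b h
  funext i
  have := congrFun h i
  simp only [hf] at this
  have h2 : (a i : ℝ) = b i := by linarith
  exact_mod_cast h2

theorem dot_hf (a b : Fin 8 → ℤ) : dot (hf a) (hf b) = (dz a b : ℝ) / 4 := by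
  simp only [dot, hf, dz]
  push_cast
  rw [Finset.sum_div]
  exact Finset.sum_congr rfl fun i _ => by ring

theorem root_iff (a : Fin 8 → ℝ) : isRoot a ↔ ∃ m, IsD m ∧ a = hf m := by
  constructor
  · rintro ⟨⟨h1, n, hn⟩, h2⟩
    have main : ∀ m : Fin 8 → ℤ, a = hf m → ((∀ i, m i % 2 = 0) ∨ (∀ i, m i % 2 = 1)) → IsD m := by
      intro m hm hp
      refine ⟨hp, ?_, ?_⟩
      · rw [hm] at hn
        simp only [hf, ← Finset.sum_div] at hn
        have : ((∑ i, m i : ℤ) : ℝ) = ((4 * n : ℤ) : ℝ) := by push_cast; linarith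
        have := Int.cast_injective this
        omega
      · rw [hm, dot_hf] at h2
        have : (dz m m : ℝ) = ((8 : ℤ) : ℝ) := by push_cast; linarith
        exact Int.cast_injective this
    rcases h1 with h1 | h1
    · choose k hk using h1
      have e : a = hf (fun i => 2 * k i) := by
        funext i; rw [hk i]; simp [hf]
      exact ⟨_, main _ e (Or.inl fun i => by omega), e⟩
    · choose k hk using h1
      have e : a = hf (fun i => 2 * k i + 1) := by
        funext i; rw [hk i]; simp [hf]; ring
      exact ⟨_, main _ e (Or.inr fun i => by omega), e⟩
  · rintro ⟨m, ⟨h1, h2, h3⟩, rfl⟩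
    refine ⟨⟨?_, ?_⟩, ?_⟩
    · rcases h1 with h1 | h1
      · left; intro i
        refine ⟨m i / 2, ?_⟩
        have : m i = 2 * (m i / 2) := by have := h1 i; omega
        have : (m i : ℝ) = 2 * ((m i / 2 : ℤ) : ℝ) := by exact_mod_cast this
        simp only [hf]; linarith
      · right; intro i
        refine ⟨m i / 2, ?_⟩
        have : m i = 2 * (m i / 2) + 1 := by have := h1 i; omega
        have : (m i : ℝ) = 2 * ((m i / 2 : ℤ) : ℝ) + 1 := by exact_mod_cast this
        simp only [hf]; linarith
    · refine ⟨(∑ i, m i) / 4, ?_⟩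
      have : ∑ i, m i = 4 * ((∑ i, m i) / 4) := by omega
      have : ((∑ i, m i : ℤ) : ℝ) = 4 * (((∑ i, m i) / 4 : ℤ) : ℝ) := by exact_mod_cast this
      simp only [hf, ← Finset.sum_div]
      push_cast at this ⊢
      linarith
    · rw [dot_hf]
      have : dz m m = 8 := h3
      rw [this]; norm_num

theorem dz_dvd {a b : Fin 8 → ℤ} (ha : IsD a) (hb : IsD b) : 4 ∣ dz a b := by
  obtain ⟨a1, a2, -⟩ := ha
  obtain ⟨b1, b2, -⟩ := hb
  have ev : ∀ a : Fin 8 → ℤ, (∀ i, a i % 2 = 0) → ∃ k : Fin 8 → ℤ, ∀ i, a i = 2 * k i :=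
    fun a h => ⟨fun i => a i / 2, fun i => by have := h i; dsimp only; omega⟩
  have od : ∀ a : Fin 8 → ℤ, (∀ i, a i % 2 = 1) → ∃ k : Fin 8 → ℤ, ∀ i, a i = 2 * k i + 1 :=
    fun a h => ⟨fun i => a i / 2, fun i => by have := h i; dsimp only; omega⟩
  unfold dz
  rcases a1 with a1 | a1 <;> rcases b1 with b1 | b1
  · obtain ⟨k, hk⟩ := ev a a1
    obtain ⟨l, hl⟩ := ev b b1
    refine ⟨∑ i, k i * l i, ?_⟩
    rw [Finset.mul_sum]
    exact Finset.sum_congr rfl fun i _ => by rw [hk, hl]; ring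
  · obtain ⟨k, hk⟩ := ev a a1
    obtain ⟨l, hl⟩ := od b b1
    have : ∑ i, a i * b i = 4 * ∑ i, k i * l i + ∑ i, a i := by
      rw [Finset.mul_sum, ← Finset.sum_add_distrib]
      exact Finset.sum_congr rfl fun i _ => by rw [hk, hl]; ring
    omega
  · obtain ⟨k, hk⟩ := od a a1
    obtain ⟨l, hl⟩ := ev b b1
    have : ∑ i, a i * b i = 4 * ∑ i, k i * l i + ∑ i, b i := by
      rw [Finset.mul_sum, ← Finset.sum_add_distrib]
      exact Finset.sum_congr rfl fun i _ => by rw [hk, hl]; ring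
    omega
  · obtain ⟨k, hk⟩ := od a a1
    obtain ⟨l, hl⟩ := od b b1
    have : ∑ i, a i * b i = 4 * ∑ i, k i * l i + ∑ i, a i + ∑ i, b i - 8 := by
      have h8 : (8 : ℤ) = ∑ i : Fin 8, 1 := by simp
      rw [h8, Finset.mul_sum, ← Finset.sum_add_distrib, ← Finset.sum_add_distrib,
        ← Finset.sum_sub_distrib]
      exact Finset.sum_congr rfl fun i _ => by rw [hk, hl]; ring
    omega

theorem dot_comm (a b : Fin 8 → ℝ) : dot a b = dot b a :=
  Finset.sum_congr rfl fun i _ => mul_comm _ _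
theorem dot_add (a b c : Fin 8 → ℝ) : dot a (b + c) = dot a b + dot a c := by
  simp only [dot, Pi.add_apply, mul_add, Finset.sum_add_distrib]
theorem dot_sub (a b c : Fin 8 → ℝ) : dot a (b - c) = dot a b - dot a c := by
  simp only [dot, Pi.sub_apply, mul_sub, Finset.sum_sub_distrib]
theorem add_dot (a b c : Fin 8 → ℝ) : dot (b + c) a = dot b a + dot c a := by
  simp only [dot, Pi.add_apply, add_mul, Finset.sum_add_distrib]
theorem sub_dot (a b c : Fin 8 → ℝ) : dot (b - c) a = dot b a - dot c a := by
  simp only [dot, Pi.sub_apply, sub_mul, Finset.sum_sub_distrib]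
theorem dot_nonneg (a : Fin 8 → ℝ) : 0 ≤ dot a a :=
  Finset.sum_nonneg fun i _ => mul_self_nonneg _
theorem dot_zero {a : Fin 8 → ℝ} (h : dot a a = 0) : a = 0 := by
  funext i
  have := (Finset.sum_eq_zero_iff_of_nonneg (fun i _ => mul_self_nonneg (a i))).1 h i (Finset.mem_univ i)
  simpa using this

theorem root_dot_le {a b : Fin 8 → ℝ} (ha : isRoot a) (hb : isRoot b) : dot a b ≤ 2 := by
  have := dot_nonneg (a - b)
  rw [dot_sub, sub_dot, sub_dot, dot_comm b a, ha.2, hb.2] at this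
  linarith
theorem root_dot_eq {a b : Fin 8 → ℝ} (ha : isRoot a) (hb : isRoot b) (h : dot a b = 2) : a = b := by
  apply sub_eq_zero.1
  apply dot_zero
  rw [dot_sub, sub_dot, sub_dot, dot_comm b a, ha.2, hb.2, h]
  norm_num
theorem root_dot_int {a b : Fin 8 → ℝ} (ha : isRoot a) (hb : isRoot b) : ∃ n : ℤ, dot a b = n := by
  obtain ⟨m, hm, rfl⟩ := (root_iff a).1 ha
  obtain ⟨n, hn, rfl⟩ := (root_iff b).1 hb
  obtain ⟨k, hk⟩ := dz_dvd hm hn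
  exact ⟨k, by rw [dot_hf, hk]; push_cast; ring⟩

def TT (v : Fin 8 → ℝ) : Set (Fin 8 → ℝ) := {a | isRoot a ∧ dot a v = 2}

theorem TT_eq {e1 e2 : Fin 8 → ℝ} (h1 : isRoot e1) (h2 : isRoot e2) (h : dot e1 e2 = 0) :
    TT (e1 + e2) = insert e1 (insert e2 {e | isRoot e ∧ dot e e1 = 1 ∧ dot e e2 = 1}) := by
  ext x
  simp only [TT, Set.mem_setOf_eq, Set.mem_insert_iff, dot_add]
  constructor
  · rintro ⟨hx, hd⟩
    have l1 := root_dot_le hx h1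
    have l2 := root_dot_le hx h2
    obtain ⟨a, ha⟩ := root_dot_int hx h1
    obtain ⟨b, hb⟩ := root_dot_int hx h2
    rw [ha] at l1 hd
    rw [hb] at l2 hd
    have l1' : a ≤ 2 := by exact_mod_cast l1
    have l2' : b ≤ 2 := by exact_mod_cast l2
    have hd' : a + b = 2 := by exact_mod_cast hd
    have : a = 2 ∨ b = 2 ∨ (a = 1 ∧ b = 1) := by omega
    rcases this with rfl | rfl | ⟨rfl, rfl⟩
    · left; exact root_dot_eq hx h1 (by rw [ha]; norm_num)
    · right; left; exact root_dot_eq hx h2 (by rw [hb]; norm_num)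
    · right; right; exact ⟨hx, by rw [ha]; norm_num, by rw [hb]; norm_num⟩
  · rintro (rfl | rfl | ⟨hx, a, b⟩)
    · exact ⟨h1, by rw [h, h1.2]; norm_num⟩
    · exact ⟨h2, by rw [dot_comm, h, h2.2]; norm_num⟩
    · exact ⟨hx, by rw [a, b]; norm_num⟩

theorem dz_add (a b c : Fin 8 → ℤ) : dz a (b + c) = dz a b + dz a c := by
  simp only [dz, Pi.add_apply, mul_add, Finset.sum_add_distrib]

theorem TT_fin {e1 e2 : Fin 8 → ℝ} (h1 : isRoot e1) (h2 : isRoot e2) (h : dot e1 e2 = 0) :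
    ∃ F : Finset (Fin 8 → ℝ), (F : Set (Fin 8 → ℝ)) = TT (e1 + e2) ∧ F.card = 14 := by
  classical
  have hv : dot (e1 + e2) (e1 + e2) = 4 := by
    rw [dot_add, add_dot, add_dot, dot_comm e2 e1, h, h1.2, h2.2]; norm_num
  obtain ⟨p, hp, rfl⟩ := (root_iff e1).1 h1
  obtain ⟨q, hq, rfl⟩ := (root_iff e2).1 h2
  have hpq : hf p + hf q = hf (p + q) := by
    funext i; simp only [hf, Pi.add_apply]; push_cast; ring
  rw [hpq] at hv ⊢
  rw [dot_hf] at hv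
  have hw : dz (p + q) (p + q) = 16 := by
    have : (dz (p + q) (p + q) : ℝ) = ((16 : ℤ) : ℝ) := by push_cast; linarith
    exact Int.cast_injective this
  have hc := count14 (p + q) hw (fun x hx => by
    rw [dz_add]
    exact dvd_add (dz_dvd ((mem_XF x).1 hx) hp) (dz_dvd ((mem_XF x).1 hx) hq))
  refine ⟨(XF.filter fun x => dz x (p + q) = 8).image hf, ?_, ?_⟩
  · ext x
    simp only [TT, Finset.coe_image, Set.mem_image, Finset.mem_coe, Finset.mem_filter, mem_XF,
      Set.mem_setOf_eq]
    constructor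
    · rintro ⟨m, ⟨hm, hd⟩, rfl⟩
      exact ⟨(root_iff _).2 ⟨m, hm, rfl⟩, by rw [dot_hf, hd]; norm_num⟩
    · rintro ⟨hx, hd⟩
      obtain ⟨m, hm, rfl⟩ := (root_iff x).1 hx
      refine ⟨m, ⟨hm, ?_⟩, rfl⟩
      rw [dot_hf] at hd
      have : (dz m (p + q) : ℝ) = ((8 : ℤ) : ℝ) := by push_cast; linarith
      exact Int.cast_injective this
  · rw [Finset.card_image_of_injective _ hf_inj, hc]

theorem inLambda_sub_root {e1 e2 x : Fin 8 → ℝ} (h1 : isRoot e1) (h2 : isRoot e2)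
    (h : dot e1 e2 = 0) (hx : x ∈ TT (e1 + e2)) : e1 + e2 - x ∈ TT (e1 + e2) := by
  have hT := hx
  rw [TT_eq h1 h2 h] at hx
  rcases hx with rfl | rfl | ⟨hx, a, b⟩
  · have : x + e2 - x = e2 := by abel
    rw [this, TT_eq h1 h2 h]; simp
  · have : e1 + x - x = e1 := by abel
    rw [this, TT_eq h1 h2 h]; simp
  · have hv : dot (e1 + e2) (e1 + e2) = 4 := by
      rw [dot_add, add_dot, add_dot, dot_comm e2 e1, h, h1.2, h2.2]; norm_num
    have hn : dot (e1 + e2 - x) (e1 + e2 - x) = 2 := by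
      rw [dot_sub, sub_dot, sub_dot, dot_comm (e1 + e2) x, hT.2, hv, hx.2]; norm_num
    refine ⟨?_, by rw [sub_dot, hv, hT.2]; norm_num⟩
    obtain ⟨p, hp, rfl⟩ := (root_iff e1).1 h1
    obtain ⟨q, hq, rfl⟩ := (root_iff e2).1 h2
    obtain ⟨m, hm, rfl⟩ := (root_iff x).1 hx
    have e : hf p + hf q - hf m = hf (p + q - m) := by
      funext i; simp only [hf, Pi.add_apply, Pi.sub_apply]; push_cast; ring
    rw [e] at hn ⊢
    refine (root_iff _).2 ⟨_, ⟨?_, ?_, ?_⟩, rfl⟩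
    · simp only [Pi.add_apply, Pi.sub_apply]
      rcases hp.1 with hp | hp <;> rcases hq.1 with hq | hq <;> rcases hm.1 with hm | hm <;>
      first
      | (left; intro i; have := hp i; have := hq i; have := hm i; omega)
      | (right; intro i; have := hp i; have := hq i; have := hm i; omega)
    · simp only [Pi.add_apply, Pi.sub_apply, Finset.sum_add_distrib, Finset.sum_sub_distrib]
      have := hp.2.1; have := hq.2.1; have := hm.2.1
      omega
    · rw [dot_hf] at hn
      have : (dz (p + q - m) (p + q - m) : ℝ) = ((8 : ℤ) : ℝ) := by push_cast; linarith
      exact Int.cast_injective this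

def pr (v x : Fin 8 → ℝ) : Set (Fin 8 → ℝ) := {x, v - x}

theorem pr_eq_iff (v x y : Fin 8 → ℝ) : pr v x = pr v y ↔ x = y ∨ x = v - y := by
  constructor
  · intro h
    have : x ∈ pr v y := h ▸ (by simp [pr])
    simpa [pr] using this
  · rintro (rfl | rfl)
    · rfl
    · simp [pr, Set.pair_comm]

def PP (v : Fin 8 → ℝ) : Set (Set (Fin 8 → ℝ)) := pr v '' TT v

theorem PP_fin {e1 e2 : Fin 8 → ℝ} (h1 : isRoot e1) (h2 : isRoot e2) (h : dot e1 e2 = 0) :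
    ∃ G : Finset (Set (Fin 8 → ℝ)), (G : Set (Set (Fin 8 → ℝ))) = PP (e1 + e2) ∧ G.card = 7 := by
  classical
  obtain ⟨F, hF, hc⟩ := TT_fin h1 h2 h
  refine ⟨F.image (pr (e1 + e2)), by rw [Finset.coe_image, hF]; rfl, ?_⟩
  have hs := Finset.card_eq_sum_card_image (pr (e1 + e2)) F
  have : ∀ b ∈ F.image (pr (e1 + e2)), (F.filter fun x => pr (e1 + e2) x = b).card = 2 := by
    intro b hb
    obtain ⟨y, hy, rfl⟩ := Finset.mem_image.1 hb
    have hyT : y ∈ TT (e1 + e2) := by rw [← hF]; exact hy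
    have hy' := inLambda_sub_root h1 h2 h hyT
    have : (F.filter fun x => pr (e1 + e2) x = pr (e1 + e2) y) = {y, e1 + e2 - y} := by
      ext x
      simp only [Finset.mem_filter, pr_eq_iff, Finset.mem_insert, Finset.mem_singleton]
      constructor
      · exact fun h => h.2
      · intro hx
        refine ⟨?_, hx⟩
        rcases hx with rfl | rfl
        · exact hy
        · rw [← hF] at hy'; exact hy'
    rw [this, Finset.card_pair]
    intro e
    have h3 : dot y (e1 + e2 - y) = 0 := by rw [dot_sub, hyT.2, hyT.1.2]; norm_num
    rw [← e, hyT.1.2] at h3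
    norm_num at h3
  rw [Finset.sum_const_nat this, hc] at hs
  omega

theorem cross_PP {e1 e2 : Fin 8 → ℝ} (h1 : isRoot e1) (h2 : isRoot e2) (h : dot e1 e2 = 0) :
    IsCross (PP (e1 + e2)) := by
  classical
  obtain ⟨G, hG, hc⟩ := PP_fin h1 h2 h
  let φ : Fin 7 ≃ G := (Fintype.equivFinOfCardEq (by simpa using hc)).symm
  have hex : ∀ i, ∃ x ∈ TT (e1 + e2), pr (e1 + e2) x = φ i := by
    intro i
    have : ((φ i : Set (Fin 8 → ℝ))) ∈ PP (e1 + e2) := by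
      rw [← hG]; exact (φ i).2
    exact this
  choose e he hpe using hex
  have key : ∀ x ∈ TT (e1 + e2), ∀ y ∈ TT (e1 + e2), pr (e1 + e2) x ≠ pr (e1 + e2) y →
      dot x y = 1 := by
    intro x hx y hy hne
    rw [Ne, pr_eq_iff, not_or] at hne
    obtain ⟨k, hk⟩ := root_dot_int hx.1 hy.1
    have hy' := inLambda_sub_root h1 h2 h hy
    have l1 := root_dot_le hx.1 hy.1
    have l2 := root_dot_le hx.1 hy'.1
    have n1 : dot x y ≠ 2 := fun e => hne.1 (root_dot_eq hx.1 hy.1 e)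
    have n2 : dot x (e1 + e2 - y) ≠ 2 := fun e => hne.2 (root_dot_eq hx.1 hy'.1 e)
    rw [dot_sub, hx.2, hk] at l2 n2
    rw [hk] at l1 n1 ⊢
    have l1' : k ≤ 2 := by exact_mod_cast l1
    have n1' : k ≠ 2 := by exact_mod_cast n1
    have l2' : 2 - k ≤ 2 := by exact_mod_cast l2
    have n2' : 2 - k ≠ 2 := by exact_mod_cast n2
    have : k = 1 := by omega
    rw [this]; norm_num
  have hf' : ∀ i, e1 + e2 - e i ∈ TT (e1 + e2) := fun i => inLambda_sub_root h1 h2 h (he i)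
  have hpf : ∀ i, pr (e1 + e2) (e1 + e2 - e i) = φ i := fun i => by
    rw [← hpe i, pr_eq_iff]; right; rfl
  have hφ : ∀ i j, i ≠ j → (φ i : Set (Fin 8 → ℝ)) ≠ φ j := by
    intro i j hij e
    exact hij (φ.injective (Subtype.ext e))
  refine ⟨e, fun i => e1 + e2 - e i, ?_, fun i => ⟨(he i).1, (hf' i).1⟩, ?_, ?_⟩
  · rw [← hG]
    ext s
    simp only [Set.mem_range, Finset.mem_coe]
    constructor
    · intro hs
      refine ⟨φ.symm ⟨s, hs⟩, ?_⟩
      have := hpe (φ.symm ⟨s, hs⟩)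
      rw [Equiv.apply_symm_apply] at this
      exact this
    · rintro ⟨i, rfl⟩
      have := hpe i
      change pr (e1 + e2) (e i) ∈ G
      rw [this]; exact (φ i).2
  · intro i
    rw [dot_sub, (he i).2, (he i).1.2]; norm_num
  · intro i j hij
    refine ⟨key _ (he i) _ (he j) ?_, key _ (he i) _ (hf' j) ?_, key _ (hf' i) _ (hf' j) ?_⟩
    · rw [hpe, hpe]; exact hφ i j hij
    · rw [hpe, hpf]; exact hφ i j hij
    · rw [hpf, hpf]; exact hφ i j hij

theorem sUnion_PP {e1 e2 : Fin 8 → ℝ} (h1 : isRoot e1) (h2 : isRoot e2) (h : dot e1 e2 = 0) :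
    ⋃₀ PP (e1 + e2) = TT (e1 + e2) := by
  ext x
  constructor
  · rintro ⟨s, ⟨y, hy, rfl⟩, hx⟩
    rcases hx with rfl | hx
    · exact hy
    · rw [Set.mem_singleton_iff.1 hx]; exact inLambda_sub_root h1 h2 h hy
  · intro hx
    exact ⟨_, ⟨x, hx, rfl⟩, by simp [pr]⟩

theorem cross_unique {e1 e2 : Fin 8 → ℝ} (h1 : isRoot e1) (h2 : isRoot e2) (h : dot e1 e2 = 0)
    {P : Set (Set (Fin 8 → ℝ))} (hP : IsCross P) (m1 : e1 ∈ ⋃₀ P) (m2 : e2 ∈ ⋃₀ P) :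
    P = PP (e1 + e2) := by
  classical
  obtain ⟨e, f, rfl, hr, h0, hd⟩ := hP
  obtain ⟨_, ⟨i, rfl⟩, hi⟩ := m1
  obtain ⟨_, ⟨j, rfl⟩, hj⟩ := m2
  simp only [Set.mem_insert_iff, Set.mem_singleton_iff] at hi hj
  have hij : i = j := by
    by_contra hne
    obtain ⟨a, b, c⟩ := hd i j hne
    obtain ⟨-, d, -⟩ := hd j i (Ne.symm hne)
    rw [dot_comm] at d
    rcases hi with rfl | rfl <;> rcases hj with rfl | rfl <;> linarith
  subst hij
  have hsum : e i + f i = e1 + e2 := by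
    rcases hi with hi | hi <;> rcases hj with hj | hj
    · rw [hi, hj, (hr i).1.2] at h; norm_num at h
    · rw [hi, hj]
    · rw [hi, hj, add_comm]
    · rw [hi, hj, (hr i).2.2] at h; norm_num at h
  have hall : ∀ k, e k + f k = e1 + e2 := by
    intro k
    rw [← hsum]
    by_cases hk : k = i
    · rw [hk]
    obtain ⟨a, b, c⟩ := hd k i hk
    obtain ⟨-, d, -⟩ := hd i k (Ne.symm hk)
    rw [dot_comm] at d
    apply sub_eq_zero.1
    apply dot_zero
    simp only [dot_sub, sub_dot, dot_add, add_dot]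
    rw [dot_comm (e i) (e k), dot_comm (e i) (f k), dot_comm (f i) (e k), dot_comm (f i) (f k),
      dot_comm (f k) (e k), dot_comm (f i) (e i), h0, h0, (hr i).1.2, (hr i).2.2, (hr k).1.2,
      (hr k).2.2, a, b, c, d]
    norm_num
  have hinj : Function.Injective (fun i => ({e i, f i} : Set (Fin 8 → ℝ))) := by
    intro k l hkl
    by_contra hne
    obtain ⟨a, b, c⟩ := hd k l hne
    have hm : e k ∈ ({e l, f l} : Set (Fin 8 → ℝ)) := by
      rw [← show ({e k, f k} : Set (Fin 8 → ℝ)) = {e l, f l} from hkl]; simp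
    rcases hm with hm | hm
    · rw [hm, (hr l).1.2] at a; norm_num at a
    · rw [Set.mem_singleton_iff.1 hm, (hr l).2.2] at b; norm_num at b
  obtain ⟨G, hG, hc⟩ := PP_fin h1 h2 h
  have hsub : Finset.univ.image (fun i => ({e i, f i} : Set (Fin 8 → ℝ))) ⊆ G := by
    intro s hs
    obtain ⟨k, -, rfl⟩ := Finset.mem_image.1 hs
    rw [← Finset.mem_coe, hG]
    refine ⟨e k, ⟨(hr k).1, ?_⟩, ?_⟩
    · rw [← hall k, dot_add, h0, (hr k).1.2]; norm_num
    · rw [pr, ← hall k, add_sub_cancel_left]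
  have := Finset.eq_of_subset_of_card_le hsub (by
    rw [Finset.card_image_of_injective _ hinj, hc]; simp)
  rw [← hG, ← this]
  simp

/-- For orthogonal roots `e₁, e₂` there are exactly 12 roots `e` with
`e·e₁ = e·e₂ = 1`; these 12 roots together with `e₁, e₂` form the 14 roots of an
element of `C` one of whose pairs is `{e₁,e₂}`, and this element of `C` is unique
among those containing both `e₁` and `e₂` among their roots. -/
theorem stmt_7 (e1 e2 : Fin 8 → ℝ) (h1 : isRoot e1) (h2 : isRoot e2)
    (h : dot e1 e2 = 0) :
    {e | isRoot e ∧ dot e e1 = 1 ∧ dot e e2 = 1}.ncard = 12 ∧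
    (∃ P : Set (Set (Fin 8 → ℝ)), IsCross P ∧ ({e1, e2} : Set (Fin 8 → ℝ)) ∈ P) ∧
    (∀ P : Set (Set (Fin 8 → ℝ)), IsCross P → ({e1, e2} : Set (Fin 8 → ℝ)) ∈ P →
      ⋃₀ P = insert e1 (insert e2 {e | isRoot e ∧ dot e e1 = 1 ∧ dot e e2 = 1})) ∧
    (∀ P Q : Set (Set (Fin 8 → ℝ)), IsCross P → IsCross Q →
      e1 ∈ ⋃₀ P → e2 ∈ ⋃₀ P → e1 ∈ ⋃₀ Q → e2 ∈ ⋃₀ Q → P = Q) := by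
  have hT := TT_eq h1 h2 h
  have hm1 : e1 ∈ TT (e1 + e2) := by rw [hT]; simp
  have hpr : pr (e1 + e2) e1 = {e1, e2} := by rw [pr, add_sub_cancel_left]
  refine ⟨?_, ⟨PP (e1 + e2), cross_PP h1 h2 h, ⟨e1, hm1, hpr⟩⟩, ?_, ?_⟩
  · obtain ⟨F, hF, hc⟩ := TT_fin h1 h2 h
    have hcard : (TT (e1 + e2)).ncard = 14 := by rw [← hF, Set.ncard_coe_finset, hc]
    have hfin : (TT (e1 + e2)).Finite := by rw [← hF]; exact F.finite_toSet
    rw [hT] at hcard hfin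
    have hf2 := hfin.subset (Set.subset_insert _ _)
    have hf3 := hf2.subset (Set.subset_insert _ _)
    have n1 : e1 ∉ insert e2 {e | isRoot e ∧ dot e e1 = 1 ∧ dot e e2 = 1} := by
      rintro (e | ⟨-, a, -⟩)
      · rw [← e, h1.2] at h; norm_num at h
      · rw [h1.2] at a; norm_num at a
    have n2 : e2 ∉ {e | isRoot e ∧ dot e e1 = 1 ∧ dot e e2 = 1} := by
      rintro ⟨-, -, a⟩
      rw [h2.2] at a; norm_num at a
    rw [Set.ncard_insert_of_notMem n1 hf2, Set.ncard_insert_of_notMem n2 hf3] at hcard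
    omega
  · intro P hP hm
    rw [cross_unique h1 h2 h hP ⟨_, hm, by simp⟩ ⟨_, hm, by simp⟩, sUnion_PP h1 h2 h, hT]
  · intro P Q hP hQ a b c d
    rw [cross_unique h1 h2 h hP a b, cross_unique h1 h2 h hQ c d]
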